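/- arXiv:2412.12952 — 2 statements merged into one kernel-verified Lean document; each statement's English description precedes it below -/
import Mathlib

section
/- Let G be a simple graph on n vertices and m edges with Laplacian eigenvalues μ₁ ≥ … ≥ μₙ, let 1 ≤ k ≤ n, and set t = μ₁/n. Then S_k(G) = Σ_{i=1}^{k} μᵢ ≤ n·t + √((k − 1)·(M₁(G) + 2m + n²·t(1 − t))), where M₁(G) is the first Zagreb index of G. -/
/-!
The trace of `L²`, for `L` the Laplacian matrix, can be computed in two ways: from the spectrum it
is `∑ μᵢ²`, and from the entries it is `∑ᵥ deg(v)² + ∑ᵥ deg(v) = M₁ + 2m`. Hence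
`μ₂² + … + μₖ² ≤ M₁ + 2m - μ₁²`, and the Cauchy–Schwarz inequality gives
`μ₂ + … + μₖ ≤ √((k - 1)(M₁ + 2m - μ₁²))`. Since `n t = μ₁` and
`n² t (1 - t) = n μ₁ - μ₁²`, the stated bound exceeds this one by the term `n μ₁` under the root,
which is nonnegative because `L` is positive semidefinite.
-/

/-- The second spectral moment of a real symmetric matrix is the trace of its square. -/
lemma sum_sq_eigenvalues_eq_trace {ι : Type*} [Fintype ι] [DecidableEq ι] {A : Matrix ι ι ℝ}
    (hA : A.IsHermitian) : ∑ i, hA.eigenvalues i ^ 2 = (A * A).trace := by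
  conv_rhs => rw [hA.spectral_theorem]
  rw [← map_mul, Unitary.conjStarAlgAut_apply, Matrix.trace_mul_cycle]
  simp [Matrix.trace, Matrix.diagonal_mul_diagonal, pow_two]

lemma trace_lapMatrix_sq {V : Type*} [Fintype V] [DecidableEq V] (G : SimpleGraph V)
    [DecidableRel G.Adj] :
    (G.lapMatrix ℝ * G.lapMatrix ℝ).trace
      = (∑ v, (G.degree v : ℝ) ^ 2) + 2 * G.edgeFinset.card := by
  have h2 : (2 * G.edgeFinset.card : ℝ) = ∑ v, (G.degree v : ℝ) := by
    exact_mod_cast G.sum_degrees_eq_twice_card_edges.symm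
  rw [h2, ← Finset.sum_add_distrib, Matrix.trace]
  refine Finset.sum_congr rfl fun v _ => ?_
  -- The cross terms vanish: the adjacency matrix has zero diagonal.
  rw [Matrix.diag_apply, SimpleGraph.lapMatrix, SimpleGraph.degMatrix, sub_mul, mul_sub, mul_sub]
  simp only [Matrix.sub_apply, Matrix.diagonal_mul_diagonal, Matrix.diagonal_mul,
    Matrix.mul_diagonal, SimpleGraph.adjMatrix_mul_self_apply_self]
  simp [pow_two]

/-- For a simple graph `G` on `n` vertices and `m` edges with Laplacian eigenvalues
`μ₁ ≥ … ≥ μₙ`, `1 ≤ k ≤ n`, and `t = μ₁ / n`, one has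
`S_k(G) = ∑_{i=1}^{k} μᵢ ≤ n t + √((k − 1)(M₁(G) + 2 m + n² t (1 − t)))`,
where `M₁(G) = ∑ᵥ deg(v)²` is the first Zagreb index. -/
theorem statement5 {n m k : ℕ} (G : SimpleGraph (Fin n)) [DecidableRel G.Adj]
    (hm : G.edgeFinset.card = m)
    (hL : (G.lapMatrix ℝ).IsHermitian)
    (μ : ℕ → ℝ)
    (hμeig : ∃ e : Fin n ≃ Fin n, ∀ j : Fin n, μ ((j : ℕ) + 1) = hL.eigenvalues (e j))
    (hμdec : ∀ i j : ℕ, 1 ≤ i → i ≤ j → j ≤ n → μ j ≤ μ i)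
    (hk1 : 1 ≤ k) (hkn : k ≤ n)
    (t : ℝ) (ht : t = μ 1 / n) :
    ∑ i ∈ Finset.Icc 1 k, μ i
      ≤ n * t + Real.sqrt ((k - 1) *
          ((∑ v : Fin n, (G.degree v : ℝ) ^ 2) + 2 * m + n ^ 2 * t * (1 - t))) := by
  obtain ⟨e, he⟩ := hμeig
  have hn : (0 : ℝ) < n := by exact_mod_cast hk1.trans hkn
  have hnt : n * t = μ 1 := by rw [ht]; field_simp
  have hμ1 : 0 ≤ μ 1 := by
    have h := he ⟨0, by omega⟩
    simp only [zero_add] at h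
    rw [h]
    exact (G.posSemidef_lapMatrix ℝ).eigenvalues_nonneg _
  have hmoment : ∑ i ∈ Finset.Icc 1 n, μ i ^ 2 = (∑ v, (G.degree v : ℝ) ^ 2) + 2 * m := by
    rw [← hm, ← trace_lapMatrix_sq, ← sum_sq_eigenvalues_eq_trace hL,
      ← Equiv.sum_comp e]
    simp_rw [← he]
    rw [Fin.sum_univ_eq_sum_range (fun j => μ (j + 1) ^ 2) n, Finset.range_eq_Ico,
      Finset.sum_Ico_add' (fun i => μ i ^ 2) 0 n 1]
    rfl
  have hsplit : ∀ (f : ℕ → ℝ) (l : ℕ), 1 ≤ l →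
      ∑ i ∈ Finset.Icc 1 l, f i = f 1 + ∑ i ∈ Finset.Icc 2 l, f i := fun f l hl =>
    (Finset.add_sum_Ioc_eq_sum_Icc hl).symm
  have htail : ∑ i ∈ Finset.Icc 2 k, μ i ^ 2
      ≤ (∑ v, (G.degree v : ℝ) ^ 2) + 2 * m - μ 1 ^ 2 := by
    have hmono : ∑ i ∈ Finset.Icc 2 k, μ i ^ 2 ≤ ∑ i ∈ Finset.Icc 2 n, μ i ^ 2 :=
      Finset.sum_le_sum_of_subset_of_nonneg (Finset.Icc_subset_Icc_right hkn)
        fun _ _ _ => sq_nonneg _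
    have := hsplit (fun i => μ i ^ 2) n (hk1.trans hkn)
    linarith
  have hcard : ((Finset.Icc 2 k).card : ℝ) = k - 1 := by
    rw [Nat.card_Icc, show k + 1 - 2 = k - 1 by omega, Nat.cast_sub hk1, Nat.cast_one]
  have hk0 : (0 : ℝ) ≤ k - 1 := by rw [← hcard]; positivity
  rw [hsplit μ k hk1, hnt]
  refine add_le_add_right (Real.le_sqrt_of_sq_le ?_) _
  have hcs := sq_sum_le_card_mul_sum_sq (s := Finset.Icc 2 k) (f := μ)
  rw [hcard] at hcs
  refine hcs.trans (mul_le_mul_of_nonneg_left ?_ hk0)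
  have hext : (n : ℝ) ^ 2 * t * (1 - t) = n * μ 1 - μ 1 ^ 2 := by rw [← hnt]; ring
  have := mul_nonneg hn.le hμ1
  linarith
end

section
/- Let G be a simple graph on n ≥ 2 vertices and m edges such that √(2n − 2m + 2√(2m² + mn(n − 1))) < 1 + 8m²/(n²(n − 1)) + 4m/n, and let k be a natural number with k ≤ n and √(2n − 2m + 2√(2m² + mn(n − 1))) ≤ k ≤ 1 + 8m²/(n²(n − 1)) + 4m/n. Then the sum of the k largest Laplacian eigenvalues of G satisfies S_k(G) ≤ m + (k + 1 choose 2) = m + k(k + 1)/2. -/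
open Finset

/-!
The lower bound on `k` already forces the conclusion. A simple graph has `2 m ≤ n (n - 1)`, so the
inner root is at least `√(4 m²) = 2 m`, hence `k² ≥ 2 n - 2 m + 4 m = 2 n + 2 m ≥ 2 m`. The
Laplacian is positive semidefinite, so any `k` of its eigenvalues sum to at most its trace, and
`S_k(G) ≤ 2 m ≤ m + k² / 2 ≤ m + k (k + 1) / 2`.
-/

/-- The Laplacian eigenvalues sum to the trace, which is the degree sum `2 m`. -/
lemma sum_eigenvalues_lapMatrix {V : Type*} [Fintype V] [DecidableEq V] (G : SimpleGraph V)
    [DecidableRel G.Adj] (hL : (G.lapMatrix ℝ).IsHermitian) :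
    ∑ i, hL.eigenvalues i = 2 * (G.edgeFinset.card : ℝ) := by
  have h := hL.trace_eq_sum_eigenvalues
  have h2 : (G.lapMatrix ℝ).trace = ∑ v, (G.degree v : ℝ) := by
    simp [Matrix.trace, SimpleGraph.lapMatrix, SimpleGraph.degMatrix]
  rw [h2] at h
  have h3 := G.sum_degrees_eq_twice_card_edges
  have h4 : ∑ v, (G.degree v : ℝ) = 2 * (G.edgeFinset.card : ℝ) := by exact_mod_cast h3
  rw [← h4, h]
  simp

/-- Brouwer's conjecture holds for simple graphs on `n ≥ 2` vertices and `m` edges with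
`√(2 n − 2 m + 2 √(2 m² + m n (n − 1))) < 1 + 8 m²/(n²(n − 1)) + 4 m/n`, for every
natural number `k ≤ n` lying in the interval
`[√(2 n − 2 m + 2 √(2 m² + m n (n − 1))), 1 + 8 m²/(n²(n − 1)) + 4 m/n]`:
`S_k(G) ≤ m + k(k + 1)/2`. -/
theorem statement14 {n m k : ℕ} (hn : 2 ≤ n) (G : SimpleGraph (Fin n)) [DecidableRel G.Adj]
    (hm : G.edgeFinset.card = m)
    (hL : (G.lapMatrix ℝ).IsHermitian)
    (μ : ℕ → ℝ)
    (hμeig : ∃ e : Fin n ≃ Fin n, ∀ j : Fin n, μ ((j : ℕ) + 1) = hL.eigenvalues (e j))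
    (hμdec : ∀ i j : ℕ, 1 ≤ i → i ≤ j → j ≤ n → μ j ≤ μ i)
    (hG : Real.sqrt (2 * (n : ℝ) - 2 * m +
            2 * Real.sqrt (2 * (m : ℝ) ^ 2 + m * n * ((n : ℝ) - 1)))
          < 1 + 8 * (m : ℝ) ^ 2 / ((n : ℝ) ^ 2 * ((n : ℝ) - 1)) + 4 * m / n)
    (hkn : k ≤ n)
    (hklb : Real.sqrt (2 * (n : ℝ) - 2 * m +
            2 * Real.sqrt (2 * (m : ℝ) ^ 2 + m * n * ((n : ℝ) - 1))) ≤ (k : ℝ))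
    (hkub : (k : ℝ) ≤ 1 + 8 * (m : ℝ) ^ 2 / ((n : ℝ) ^ 2 * ((n : ℝ) - 1)) + 4 * m / n) :
    ∑ i ∈ Finset.Icc 1 k, μ i ≤ (m : ℝ) + k * (k + 1) / 2 := by
  obtain ⟨e, he⟩ := hμeig
  have hnonneg : ∀ i ∈ Finset.Icc 1 n, 0 ≤ μ i := by
    intro i hi
    rw [Finset.mem_Icc] at hi
    have h := he ⟨i - 1, by omega⟩
    have hi1 : i - 1 + 1 = i := by omega
    simp only [hi1] at h
    rw [h]
    exact (SimpleGraph.posSemidef_lapMatrix ℝ G).eigenvalues_nonneg _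
  have hsum : ∑ i ∈ Finset.Icc 1 n, μ i = 2 * (m : ℝ) := by
    rw [← Finset.Ico_add_one_right_eq_Icc, Finset.sum_Ico_eq_sum_range]
    simp only [Nat.add_sub_cancel, add_comm 1]
    rw [Finset.sum_range (fun i => μ (i + 1)), Finset.sum_congr rfl fun j _ => he j,
      Equiv.sum_comp e, sum_eigenvalues_lapMatrix, hm]
  have hle : ∑ i ∈ Finset.Icc 1 k, μ i ≤ 2 * (m : ℝ) := by
    rw [← hsum]
    exact Finset.sum_le_sum_of_subset_of_nonneg (Finset.Icc_subset_Icc_right hkn)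
      fun i hi _ => hnonneg i hi
  have hedge : 2 * (m : ℝ) ≤ n * ((n : ℝ) - 1) := by
    have h := G.card_edgeFinset_le_card_choose_two
    rw [hm, Fintype.card_fin] at h
    have h' : (m : ℝ) ≤ (n.choose 2 : ℝ) := by exact_mod_cast h
    rw [Nat.cast_choose_two] at h'
    linarith
  have hm0 : (0 : ℝ) ≤ m := Nat.cast_nonneg m
  have hn0 : (0 : ℝ) ≤ n := Nat.cast_nonneg n
  have hk0 : (0 : ℝ) ≤ k := Nat.cast_nonneg k
  have hinner : 2 * (m : ℝ) ≤ Real.sqrt (2 * (m : ℝ) ^ 2 + m * n * ((n : ℝ) - 1)) := by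
    apply Real.le_sqrt_of_sq_le
    nlinarith [mul_le_mul_of_nonneg_left hedge hm0]
  have hk := (Real.sqrt_le_left hk0).1 hklb
  nlinarith
end
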